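/- Let p be an odd prime and let d, e, h, f be positive integers with h − d ≤ f < d < h < e, and let G = M₃(p,d,e,h,f). Consider the action of the automorphism group Aut(G) on the set of exact (p^d, p^e)-bicyclic pairs of G given by φ·(α, β) = (φ(α), φ(β)). Then the number of orbits of this action equals p^{d+h−2(f+1)}(p−1)². -/

import Mathlib

/-- Relators for the group `M₁(p,d,e,f) = ⟨a, b ∣ a^(p^e) = b^(p^d) = 1, b⁻¹ab = a^(1+p^f)⟩`,
where `a` is generator `0` and `b` is generator `1`. -/
def M1rels (p d e f : ℕ) : Set (FreeGroup (Fin 2)) :=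
  {FreeGroup.of 0 ^ p ^ e, FreeGroup.of 1 ^ p ^ d,
    (FreeGroup.of 1)⁻¹ * FreeGroup.of 0 * FreeGroup.of 1 * (FreeGroup.of 0 ^ (1 + p ^ f))⁻¹}

/-- The metacyclic group `M₁(p,d,e,f) = ⟨a, b ∣ a^(p^e) = b^(p^d) = 1, b⁻¹ab = a^(1+p^f)⟩`. -/
abbrev M1 (p d e f : ℕ) : Type := PresentedGroup (M1rels p d e f)

/-- The canonical generator `a` of `M₁(p,d,e,f)`. -/
def M1a (p d e f : ℕ) : M1 p d e f := PresentedGroup.of 0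

/-- The canonical generator `b` of `M₁(p,d,e,f)`. -/
def M1b (p d e f : ℕ) : M1 p d e f := PresentedGroup.of 1

/-- Relators for the group `M₂(p,d,e,f) = ⟨a, b ∣ a^(p^d) = b^(p^e) = 1, b⁻¹ab = a^(1+p^f)⟩`,
where `a` is generator `0` and `b` is generator `1`. -/
def M2rels (p d e f : ℕ) : Set (FreeGroup (Fin 2)) :=
  {FreeGroup.of 0 ^ p ^ d, FreeGroup.of 1 ^ p ^ e,
    (FreeGroup.of 1)⁻¹ * FreeGroup.of 0 * FreeGroup.of 1 * (FreeGroup.of 0 ^ (1 + p ^ f))⁻¹}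

/-- The metacyclic group `M₂(p,d,e,f) = ⟨a, b ∣ a^(p^d) = b^(p^e) = 1, b⁻¹ab = a^(1+p^f)⟩`. -/
abbrev M2 (p d e f : ℕ) : Type := PresentedGroup (M2rels p d e f)

/-- The canonical generator `a` of `M₂(p,d,e,f)`. -/
def M2a (p d e f : ℕ) : M2 p d e f := PresentedGroup.of 0

/-- The canonical generator `b` of `M₂(p,d,e,f)`. -/
def M2b (p d e f : ℕ) : M2 p d e f := PresentedGroup.of 1

/-- Relators for the group
`M₃(p,d,e,h,f) = ⟨a, b ∣ a^(p^h) = 1, b^(p^(d+e-h)) = a^(p^d), b⁻¹ab = a^(1+p^f)⟩`,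
where `a` is generator `0` and `b` is generator `1`. -/
def M3rels (p d e h f : ℕ) : Set (FreeGroup (Fin 2)) :=
  {FreeGroup.of 0 ^ p ^ h, FreeGroup.of 1 ^ p ^ (d + e - h) * (FreeGroup.of 0 ^ p ^ d)⁻¹,
    (FreeGroup.of 1)⁻¹ * FreeGroup.of 0 * FreeGroup.of 1 * (FreeGroup.of 0 ^ (1 + p ^ f))⁻¹}

/-- The non-split metacyclic group
`M₃(p,d,e,h,f) = ⟨a, b ∣ a^(p^h) = 1, b^(p^(d+e-h)) = a^(p^d), b⁻¹ab = a^(1+p^f)⟩`. -/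
abbrev M3 (p d e h f : ℕ) : Type := PresentedGroup (M3rels p d e h f)

/-- The canonical generator `a` of `M₃(p,d,e,h,f)`. -/
def M3a (p d e h f : ℕ) : M3 p d e h f := PresentedGroup.of 0

/-- The canonical generator `b` of `M₃(p,d,e,h,f)`. -/
def M3b (p d e h f : ℕ) : M3 p d e h f := PresentedGroup.of 1

/-- `(α, β)` is an exact `(m,n)`-bicyclic pair of `G`: `α` has order `m`, `β` has order `n`,
`⟨α⟩ ∩ ⟨β⟩ = 1`, and `G = ⟨α⟩⟨β⟩`. -/
def IsExactBicyclicPair {G : Type*} [Group G] (m n : ℕ) (α β : G) : Prop :=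
  orderOf α = m ∧ orderOf β = n ∧
    Subgroup.zpowers α ⊓ Subgroup.zpowers β = ⊥ ∧
    ∀ g : G, ∃ i j : ℤ, g = α ^ i * β ^ j

/-- The equivalence on exact `(m,n)`-bicyclic pairs of `G` induced by the componentwise
action of `Aut(G)`: two pairs are equivalent iff some automorphism maps one to the other.
The orbits of the action are exactly the equivalence classes. -/
def bicyclicPairSetoid (G : Type*) [Group G] (m n : ℕ) :
    Setoid {x : G × G // IsExactBicyclicPair m n x.1 x.2} where
  r x y := ∃ φ : MulAut G, φ x.1.1 = y.1.1 ∧ φ x.1.2 = y.1.2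
  iseqv := by
    refine ⟨fun x => ⟨MulEquiv.refl G, rfl, rfl⟩, ?_, ?_⟩
    · rintro x y ⟨φ, h1, h2⟩
      exact ⟨φ.symm, by rw [← h1]; exact φ.symm_apply_apply _,
        by rw [← h2]; exact φ.symm_apply_apply _⟩
    · rintro x y z ⟨φ, h1, h2⟩ ⟨ψ, h3, h4⟩
      exact ⟨φ.trans ψ, by simp [MulEquiv.trans_apply, h1, h3],
        by simp [MulEquiv.trans_apply, h2, h4]⟩

section Metacyclic

open Finset

theorem geom_sum_mul_index (q m k : ℕ) :
    ∑ u ∈ range (m * k), q ^ u = (∑ u ∈ range m, q ^ u) * ∑ u ∈ range k, (q ^ m) ^ u := by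
  induction k with
  | zero => simp
  | succ k ih =>
    rw [Nat.mul_succ, Finset.sum_range_add, ih, sum_range_succ, mul_add, ← pow_mul]
    simp only [pow_add, ← mul_sum]
    ring

theorem geom_sum_modEq_of_modEq_one {q M : ℕ} (hq : q ≡ 1 [MOD M]) (m : ℕ) :
    ∑ u ∈ range m, q ^ u ≡ m [MOD M] := by
  induction m with
  | zero => rfl
  | succ m ih => rw [sum_range_succ]; simpa using ih.add (hq.pow m)

theorem geom_sum_prime_modEq {p g q : ℕ} (hodd : Odd p) (hg : 0 < g)
    (hq : q ≡ 1 [MOD p ^ g]) : ∑ u ∈ range p, q ^ u ≡ p [MOD p ^ (1 + g)] := by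
  obtain ⟨w, hw⟩ := (Nat.modEq_iff_dvd.1 hq.symm)
  have hq' : (q : ℤ) = 1 + p ^ g * w := by push_cast at hw; linarith
  have key : ∀ u : ℕ, ((p : ℤ) ^ g * w) ^ 2 ∣ (q : ℤ) ^ u - (1 + u * (p ^ g * w)) := by
    intro u
    induction u with
    | zero => simp
    | succ u ih =>
      have : (q : ℤ) ^ (u + 1) - (1 + (u + 1 : ℕ) * (p ^ g * w)) =
          q * ((q : ℤ) ^ u - (1 + u * (p ^ g * w))) + ((p : ℤ) ^ g * w) ^ 2 * u := by
        rw [pow_succ, hq']; push_cast; ring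
      rw [this]
      exact (ih.mul_left _).add (dvd_mul_right _ _)
  have h2 : (p : ℤ) ^ (1 + g) ∣ ((p : ℤ) ^ g * w) ^ 2 := by
    rw [mul_pow, ← pow_mul]
    exact (pow_dvd_pow _ (by omega)).mul_right _
  have hs : ∑ u ∈ range p, (u : ℤ) = p * ((p - 1) / 2 : ℕ) := by
    obtain ⟨m, rfl⟩ := hodd
    have h1 := Finset.sum_range_id_mul_two (2 * m + 1)
    have h2 : (2 * m + 1 - 1) / 2 = m := by omega
    rw [h2, ← Nat.cast_sum, ← Nat.cast_mul, Nat.cast_inj]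
    rw [Nat.add_sub_cancel] at h1
    linarith
  have h3 : (p : ℤ) ^ (1 + g) ∣ ∑ u ∈ range p, ((q : ℤ) ^ u - (1 + u * (p ^ g * w))) :=
    dvd_sum fun u _ => h2.trans (key u)
  rw [sum_sub_distrib, sum_add_distrib, ← sum_mul, hs] at h3
  refine (Nat.modEq_iff_dvd.2 ?_).symm
  push_cast
  have h4 : (p : ℤ) ^ (1 + g) ∣ p * ((p - 1) / 2 : ℕ) * (p ^ g * w) :=
    ⟨((p - 1) / 2 : ℕ) * w, by ring⟩
  have := h3.add h4
  simpa [sub_add_eq_sub_sub] using this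

theorem pow_prime_pow_modEq_one {p g q : ℕ} (hq : q ≡ 1 [MOD p ^ g]) (hg : 0 < g) (t : ℕ) :
    q ^ p ^ t ≡ 1 [MOD p ^ (g + t)] := by
  induction t with
  | zero => simpa using hq
  | succ t ih =>
    have h1 : (p : ℤ) ∣ ∑ u ∈ range p, ((q : ℤ) ^ p ^ t) ^ u := by
      have := geom_sum_modEq_of_modEq_one
        (ih.of_dvd (dvd_pow_self p (by omega) : p ∣ p ^ (g + t))) p
      have := (Nat.modEq_zero_iff_dvd.1 (this.trans (by simp [Nat.ModEq])))
      exact_mod_cast this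
    have h2 := (Nat.modEq_iff_dvd.1 ih.symm)
    push_cast at h2
    refine (Nat.modEq_iff_dvd.2 ?_).symm
    push_cast
    rw [pow_succ p t, pow_mul, ← mul_geom_sum, ← add_assoc, pow_succ]
    exact mul_dvd_mul h2 h1

theorem geom_sum_prime_pow_modEq {p g q : ℕ} (hodd : Odd p) (hg : 0 < g)
    (hq : q ≡ 1 [MOD p ^ g]) (t : ℕ) :
    ∑ u ∈ range (p ^ t), q ^ u ≡ p ^ t [MOD p ^ (t + g)] := by
  induction t with
  | zero => simp; rfl
  | succ t ih =>
    rw [pow_succ, geom_sum_mul_index]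
    have h1 := geom_sum_prime_modEq hodd hg
      ((pow_prime_pow_modEq_one hq hg t).of_dvd (pow_dvd_pow p (Nat.le_add_right g t)))
    have h1' := h1.mul_left' (p ^ t)
    have h2 : p ∣ ∑ u ∈ range p, (q ^ p ^ t) ^ u :=
      (h1.dvd_iff (dvd_pow_self p (by omega))).2 dvd_rfl
    obtain ⟨s, hs⟩ := h2
    rw [hs] at h1' ⊢
    have h3 := ih.mul_right' p |>.mul_right s
    rw [← pow_add, ← add_assoc] at h1'
    rw [← pow_succ] at h3
    rw [show t + 1 + g = t + g + 1 by ring, ← mul_assoc]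
    refine h3.trans ?_
    rw [mul_assoc, show t + g + 1 = t + 1 + g by ring]
    exact h1'

theorem prime_pow_dvd_of_pow_modEq_one {p f s m : ℕ} (hp : p.Prime) (hodd : Odd p) (hf : 0 < f)
    (h : (1 + p ^ f) ^ m ≡ 1 [MOD p ^ (f + s)]) : p ^ s ∣ m := by
  have h1 : p ^ (f + s) ∣ (1 + p ^ f) ^ m - 1 ^ m := by
    rw [one_pow]
    exact (Nat.modEq_iff_dvd' (Nat.one_le_pow _ _ (by omega))).1 h.symm
  have := Nat.emultiplicity_pow_sub_pow hp hodd (x := 1 + p ^ f) (y := 1)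
    (by simpa using dvd_pow_self p hf.ne')
    (by
      intro h2
      exact hp.one_lt.ne' (Nat.dvd_one.1 ((Nat.dvd_add_left (dvd_pow_self p hf.ne')).1 h2))) m
  have h2 := le_emultiplicity_of_pow_dvd h1
  rw [this] at h2
  have h3 : emultiplicity p (1 + p ^ f - 1) = f := by
    rw [Nat.add_sub_cancel_left]
    exact emultiplicity_pow_self_of_prime hp.prime f
  rw [h3] at h2
  push_cast at h2
  exact pow_dvd_of_le_emultiplicity ((ENat.add_le_add_iff_left (ENat.natCast_ne_top f)).1 h2)

/-- The elements `a`, `b` of `G` generate it as `M₃(p, d, n + c, d + c, f)`: they satisfy the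
defining relations, every element of `G` is some `b ^ j * a ^ i` with the expected uniqueness, and
`G` has the universal property of the presentation. -/
structure IsM3 {G : Type*} [Group G] (p f d c n : ℕ) (a b : G) : Prop where
  orderOf_left : orderOf a = p ^ (d + c)
  pow_right : b ^ p ^ n = a ^ p ^ d
  mul_comm' : a * b = b * a ^ (1 + p ^ f)
  modEq_of_eq : ∀ {j i j' i' : ℕ}, b ^ j * a ^ i = b ^ j' * a ^ i' → j ≡ j' [MOD p ^ n]
  exists_eq : ∀ g : G, ∃ j i : ℕ, g = b ^ j * a ^ i
  exists_lift : ∀ x y : G, x ^ p ^ (d + c) = 1 → y ^ p ^ n = x ^ p ^ d →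
    x * y = y * x ^ (1 + p ^ f) → ∃ φ : G →* G, φ a = x ∧ φ b = y

section NormalForm

variable {G : Type*} [Group G] {a b : G} {r : ℕ}

theorem pow_mul_pow_comm_of_mul_comm (hab : a * b = b * a ^ r) (i l : ℕ) :
    a ^ i * b ^ l = b ^ l * a ^ (i * r ^ l) := by
  have h1 : ∀ i : ℕ, a ^ i * b = b * a ^ (i * r) := by
    intro i
    induction i with
    | zero => simp
    | succ i ih =>
      rw [pow_succ', mul_assoc, ih, ← mul_assoc, hab, mul_assoc, ← pow_add]
      congr 2
      ring
  induction l with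
  | zero => simp
  | succ l ih =>
    rw [pow_succ, ← mul_assoc, ih, mul_assoc, h1, ← mul_assoc]
    congr 2
    ring

theorem normalForm_mul (hab : a * b = b * a ^ r) (j i l k : ℕ) :
    (b ^ j * a ^ i) * (b ^ l * a ^ k) = b ^ (j + l) * a ^ (i * r ^ l + k) := by
  rw [mul_assoc, ← mul_assoc (a ^ i), pow_mul_pow_comm_of_mul_comm hab, pow_add, pow_add]
  simp only [mul_assoc]

theorem normalForm_pow (hab : a * b = b * a ^ r) (j i m : ℕ) :
    (b ^ j * a ^ i) ^ m = b ^ (j * m) * a ^ (i * ∑ u ∈ range m, (r ^ j) ^ u) := by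
  induction m with
  | zero => simp
  | succ m ih =>
    rw [pow_succ, ih, normalForm_mul hab, geom_sum_succ]
    congr 2
    ring

end NormalForm

theorem one_add_pow_modEq_one (p f : ℕ) : 1 + p ^ f ≡ 1 [MOD p ^ f] := by
  simp [Nat.ModEq]

theorem M3_pow_left (p d e h f : ℕ) : M3a p d e h f ^ p ^ h = 1 :=
  PresentedGroup.one_of_mem (rels := M3rels p d e h f) (x := FreeGroup.of 0 ^ p ^ h)
    (by simp [M3rels])

theorem M3_pow_right (p d e h f : ℕ) :
    M3b p d e h f ^ p ^ (d + e - h) = M3a p d e h f ^ p ^ d :=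
  mul_inv_eq_one.1 (PresentedGroup.one_of_mem (rels := M3rels p d e h f)
    (x := FreeGroup.of 1 ^ p ^ (d + e - h) * (FreeGroup.of 0 ^ p ^ d)⁻¹) (by simp [M3rels]))

theorem M3_mul_comm (p d e h f : ℕ) :
    M3a p d e h f * M3b p d e h f = M3b p d e h f * M3a p d e h f ^ (1 + p ^ f) := by
  have h1 : (M3b p d e h f)⁻¹ * M3a p d e h f * M3b p d e h f * (M3a p d e h f ^ (1 + p ^ f))⁻¹ = 1 :=
    PresentedGroup.one_of_mem (rels := M3rels p d e h f)
      (x := (FreeGroup.of 1)⁻¹ * FreeGroup.of 0 * FreeGroup.of 1 *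
        (FreeGroup.of 0 ^ (1 + p ^ f))⁻¹) (by simp [M3rels])
  rw [mul_inv_eq_one, mul_assoc] at h1
  exact inv_mul_eq_iff_eq_mul.1 h1

theorem M3_exists_hom {p d e h f : ℕ} {K : Type*} [Group K] (x y : K) (hx : x ^ p ^ h = 1)
    (hy : y ^ p ^ (d + e - h) = x ^ p ^ d) (hxy : x * y = y * x ^ (1 + p ^ f)) :
    ∃ φ : M3 p d e h f →* K, φ (M3a p d e h f) = x ∧ φ (M3b p d e h f) = y := by
  have hrel : ∀ s ∈ M3rels p d e h f, FreeGroup.lift ![x, y] s = 1 := by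
    rintro s (rfl | rfl | rfl)
    · simpa using hx
    · simpa [mul_inv_eq_one] using hy
    · have h1 : y⁻¹ * x * y * (x ^ (1 + p ^ f))⁻¹ = 1 := by
        rw [mul_inv_eq_one, mul_assoc, hxy, inv_mul_cancel_left]
      simpa using h1
  refine ⟨PresentedGroup.toGroup hrel, ?_, ?_⟩
  · exact PresentedGroup.toGroup.of hrel
  · exact PresentedGroup.toGroup.of hrel

theorem M3_exists_eq {p f d c n : ℕ} (hodd : Odd p) (hf : 0 < f)
    {G : Type*} [Group G] {a b : G} (ha : a ^ p ^ (d + c) = 1) (hb : b ^ p ^ n = a ^ p ^ d)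
    (hab : a * b = b * a ^ (1 + p ^ f)) (hgen : Subgroup.closure {a, b} = ⊤) (g : G) :
    ∃ j i : ℕ, g = b ^ j * a ^ i := by
  have hg : g ∈ Subgroup.closure {a, b} := hgen ▸ Subgroup.mem_top g
  induction hg using Subgroup.closure_induction with
  | mem x hx =>
    rcases hx with rfl | rfl
    · exact ⟨0, 1, by simp⟩
    · exact ⟨1, 0, by simp⟩
  | one => exact ⟨0, 0, by simp⟩
  | mul x y _ _ hx hy =>
    obtain ⟨j, i, rfl⟩ := hx
    obtain ⟨l, k, rfl⟩ := hy
    exact ⟨_, _, normalForm_mul hab j i l k⟩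
  | inv x _ hx =>
    obtain ⟨j, i, rfl⟩ := hx
    have h1 : (b ^ j * a ^ i) ^ p ^ (n + (d + c)) = 1 := by
      rw [normalForm_pow hab]
      have h2 := geom_sum_prime_pow_modEq hodd hf
        (by simpa using (one_add_pow_modEq_one p f).pow j) (n + (d + c))
      have h3 := (h2.dvd_iff (pow_dvd_pow p (by omega) : p ^ (d + c) ∣ _)).2
        (pow_dvd_pow p (by omega))
      obtain ⟨s, hs⟩ := h3
      rw [hs, pow_add, mul_comm j, mul_comm i, pow_mul, pow_mul, pow_mul, pow_mul, ha, hb,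
        ← pow_mul a, mul_comm (p ^ d), pow_mul, ha]
      simp
    have hpos : 0 < p ^ (n + (d + c)) := Nat.pow_pos hodd.pos
    refine ⟨_, _, (eq_comm.1 ?_ : _ = _).trans (normalForm_pow hab j i (p ^ (n + (d + c)) - 1))⟩
    refine (inv_eq_of_mul_eq_one_left ?_).symm
    rw [← pow_succ, Nat.sub_add_cancel hpos, h1]

/-- The affine permutation `x ↦ r * x + 1`. -/
def affineShift {R : Type*} [CommRing R] (r : Rˣ) : Equiv.Perm R :=
  (Units.mulLeft r).trans (Equiv.addRight 1)

theorem affineShift_pow_apply {R : Type*} [CommRing R] (r : Rˣ) (m : ℕ) (x : R) :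
    (affineShift r ^ m) x = (r : R) ^ m * x + ∑ u ∈ range m, (r : R) ^ u := by
  induction m with
  | zero => simp
  | succ m ih =>
    rw [pow_succ', Equiv.Perm.mul_apply, ih, geom_sum_succ]
    simp [affineShift]
    ring

theorem addRight_pow_apply {R : Type*} [CommRing R] (t : R) (m : ℕ) (x : R) :
    ((Equiv.addRight t : Equiv.Perm R) ^ m) x = x + m * t := by
  induction m with
  | zero => simp
  | succ m ih =>
    rw [pow_succ', Equiv.Perm.mul_apply, ih]
    simp
    ring

theorem isM3_M3 {p f d c n : ℕ} (hp : p.Prime) (hodd : Odd p) (hf : 0 < f) (hc : 0 < c)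
    (hcf : c ≤ f) (hfd : f < d) (hdn : d < n) :
    IsM3 p f d c n (M3a p d (n + c) (d + c) f) (M3b p d (n + c) (d + c) f) := by
  have hn : d + (n + c) - (d + c) = n := by omega
  have hb : M3b p d (n + c) (d + c) f ^ p ^ n = M3a p d (n + c) (d + c) f ^ p ^ d := by
    simpa only [hn] using M3_pow_right p d (n + c) (d + c) f
  have ha := M3_pow_left p d (n + c) (d + c) f
  have hab := M3_mul_comm p d (n + c) (d + c) f
  refine ⟨?_, hb, hab, ?_, ?_, ?_⟩
  · have : Fact p.Prime := ⟨hp⟩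
    refine orderOf_eq_prime_pow (p := p) (n := d + c - 1) ?_ ?_ |>.trans (by congr 1; omega)
    swap
    · rwa [Nat.sub_add_cancel (by omega)]
    intro h1
    have hr : IsUnit ((1 + p ^ f : ℕ) : ZMod (p ^ (n + c))) := by
      rw [ZMod.isUnit_iff_coprime]
      refine Nat.Coprime.pow_right _ ?_
      have := (one_add_pow_modEq_one p f).of_dvd (dvd_pow_self p hf.ne')
      exact Nat.Coprime.symm ((Nat.Prime.coprime_iff_not_dvd hp).2 fun h =>
        hp.one_lt.ne' (Nat.dvd_one.1 ((this.dvd_iff dvd_rfl).1 h)))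
    obtain ⟨r, hr⟩ := hr
    have hz : ((p ^ (n + c) : ℕ) : ZMod (p ^ (n + c))) = 0 := ZMod.natCast_self _
    have hmod : 1 + p ^ f ≡ 1 [MOD p ^ f] := one_add_pow_modEq_one p f
    have hB : affineShift r ^ p ^ n = Equiv.addRight ((p ^ n : ℕ) : ZMod (p ^ (n + c))) := by
      ext x : 1
      rw [affineShift_pow_apply, hr]
      have h2 : (((1 + p ^ f) ^ p ^ n : ℕ) : ZMod (p ^ (n + c))) = (1 : ℕ) :=
        (ZMod.natCast_eq_natCast_iff _ _ _).2
          ((pow_prime_pow_modEq_one hmod hf n).of_dvd (pow_dvd_pow p (by omega)))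
      have h3 : ((∑ u ∈ range (p ^ n), (1 + p ^ f) ^ u : ℕ) : ZMod (p ^ (n + c))) =
          (p ^ n : ℕ) := (ZMod.natCast_eq_natCast_iff _ _ _).2
          ((geom_sum_prime_pow_modEq hodd hf hmod n).of_dvd (pow_dvd_pow p (by omega)))
      push_cast at h2 h3 ⊢
      rw [h2, h3]
      simp
    set t : ZMod (p ^ (n + c)) := ((p ^ (n - d) : ℕ) : ZMod (p ^ (n + c))) with ht
    obtain ⟨φ, hφa, -⟩ := M3_exists_hom (p := p) (d := d) (e := n + c) (h := d + c) (f := f)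
      (Equiv.addRight (-t) : Equiv.Perm (ZMod (p ^ (n + c)))) (affineShift r)⁻¹
      (by
        ext x : 1
        rw [addRight_pow_apply, ht, mul_neg, ← Nat.cast_mul, ← pow_add,
          show d + c + (n - d) = n + c by omega, hz]
        simp)
      (by
        rw [hn, inv_pow, hB]
        ext x : 1
        rw [addRight_pow_apply, ht, mul_neg, ← Nat.cast_mul, ← pow_add,
          show d + (n - d) = n by omega]
        rw [Equiv.Perm.inv_def, Equiv.symm_apply_eq]
        simp)
      (by
        rw [mul_inv_eq_iff_eq_mul, mul_assoc, eq_inv_mul_iff_mul_eq]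
        ext x : 1
        simp only [Equiv.Perm.mul_apply]
        rw [addRight_pow_apply]
        simp only [affineShift, Equiv.trans_apply, Units.mulLeft_apply, Equiv.coe_addRight, hr]
        ring)
    have h2 : (Equiv.addRight (-t) : Equiv.Perm (ZMod (p ^ (n + c)))) ^ p ^ (d + c - 1) = 1 := by
      rw [← hφa, ← map_pow, h1, map_one]
    have h3 := Equiv.congr_fun h2 0
    rw [addRight_pow_apply, ht, mul_neg, ← Nat.cast_mul, ← pow_add, zero_add,
      Equiv.Perm.one_apply, neg_eq_zero, ZMod.natCast_eq_zero_iff,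
      Nat.pow_dvd_pow_iff_le_right hp.one_lt] at h3
    omega
  · intro j i j' i' h1
    obtain ⟨φ, hφa, hφb⟩ := M3_exists_hom (p := p) (d := d) (e := n + c) (h := d + c) (f := f)
      (1 : Multiplicative (ZMod (p ^ n))) (Multiplicative.ofAdd 1) (by simp)
      (by rw [hn, ← ofAdd_nsmul]; simp) (by simp)
    have h2 := congrArg φ h1
    simp only [map_mul, map_pow, hφa, hφb, one_pow, mul_one, ← ofAdd_nsmul] at h2
    rw [Multiplicative.ofAdd.injective.eq_iff] at h2
    simpa [ZMod.natCast_eq_natCast_iff] using h2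
  · refine M3_exists_eq hodd hf ha hb hab ?_
    rw [← PresentedGroup.closure_range_of (M3rels p d (n + c) (d + c) f)]
    congr 1
    ext g
    simp [Fin.exists_fin_two, M3a, M3b, eq_comm]
  · intro x y hx hy hxy
    exact M3_exists_hom x y hx (by rwa [hn]) hxy

section NormalForm

variable {G : Type*} [Group G] {a b : G} {p f d c n : ℕ}

theorem one_add_pow_pow_modEq_one (hf : 0 < f) {s j : ℕ} (hj : p ^ s ∣ j) :
    (1 + p ^ f) ^ j ≡ 1 [MOD p ^ (f + s)] := by
  obtain ⟨t, rfl⟩ := hj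
  rw [pow_mul]
  simpa using (pow_prime_pow_modEq_one (one_add_pow_modEq_one p f) hf s).pow t

theorem geom_sum_one_add_pow_modEq (hodd : Odd p) (hf : 0 < f) {s j : ℕ} (hj : p ^ s ∣ j)
    {t m : ℕ} (hm : m ≤ t + f + s) :
    ∑ u ∈ range (p ^ t), ((1 + p ^ f) ^ j) ^ u ≡ p ^ t [MOD p ^ m] :=
  (geom_sum_prime_pow_modEq hodd (by omega) (one_add_pow_pow_modEq_one hf hj) t).of_dvd
    (pow_dvd_pow p (by omega))

namespace IsM3

theorem pow_eq_pow_iff (h : IsM3 p f d c n a b) {i i' : ℕ} :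
    a ^ i = a ^ i' ↔ i ≡ i' [MOD p ^ (d + c)] := by
  rw [pow_eq_pow_iff_modEq, h.orderOf_left]

theorem pow_eq_one_iff (h : IsM3 p f d c n a b) {i : ℕ} :
    a ^ i = 1 ↔ p ^ (d + c) ∣ i := by
  rw [← h.orderOf_left, orderOf_dvd_iff_pow_eq_one]

theorem pow_mul_right (h : IsM3 p f d c n a b) (t : ℕ) : b ^ (p ^ n * t) = a ^ (p ^ d * t) := by
  rw [pow_mul, h.pow_right, pow_mul]

theorem pow_mul_mul_pow (h : IsM3 p f d c n a b) (j t i : ℕ) :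
    b ^ (j + p ^ n * t) * a ^ i = b ^ j * a ^ (p ^ d * t + i) := by
  rw [pow_add, h.pow_mul_right, mul_assoc, pow_add]

theorem dvd_of_eq_pow (h : IsM3 p f d c n a b) {j i i' : ℕ} (he : b ^ j * a ^ i = a ^ i') :
    p ^ n ∣ j :=
  Nat.modEq_zero_iff_dvd.1 (h.modEq_of_eq (j' := 0) (i' := i') (by simpa using he))

theorem normalForm_inj (h : IsM3 p f d c n a b) {j i j' i' : ℕ}
    (hj : j < p ^ n) (hj' : j' < p ^ n) (hi : i < p ^ (d + c)) (hi' : i' < p ^ (d + c))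
    (he : b ^ j * a ^ i = b ^ j' * a ^ i') : j = j' ∧ i = i' := by
  have h1 := (h.modEq_of_eq he).eq_of_lt_of_lt hj hj'
  subst h1
  exact ⟨rfl, (h.pow_eq_pow_iff.1 (mul_left_cancel he)).eq_of_lt_of_lt hi hi'⟩

theorem exists_lt (h : IsM3 p f d c n a b) (hp : p.Prime) (g : G) :
    ∃ j < p ^ n, ∃ i < p ^ (d + c), g = b ^ j * a ^ i := by
  obtain ⟨j, i, rfl⟩ := h.exists_eq g
  refine ⟨j % p ^ n, Nat.mod_lt _ (Nat.pow_pos hp.pos), (p ^ d * (j / p ^ n) + i) % p ^ (d + c),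
    Nat.mod_lt _ (Nat.pow_pos hp.pos), ?_⟩
  rw [← h.orderOf_left, pow_mod_orderOf, ← h.pow_mul_mul_pow, Nat.mod_add_div]

theorem card_eq (h : IsM3 p f d c n a b) (hp : p.Prime) : Nat.card G = p ^ (n + (d + c)) := by
  rw [pow_add, ← Nat.card_eq_fintype_card (α := Fin (p ^ n)) |>.trans (Fintype.card_fin _),
    ← Nat.card_eq_fintype_card (α := Fin (p ^ (d + c))) |>.trans (Fintype.card_fin _),
    ← Nat.card_prod]
  symm
  refine Nat.card_eq_of_bijective
    (fun x : Fin (p ^ n) × Fin (p ^ (d + c)) => b ^ (x.1 : ℕ) * a ^ (x.2 : ℕ)) ⟨?_, ?_⟩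
  · rintro ⟨x, x'⟩ ⟨y, y'⟩ he
    have := h.normalForm_inj x.2 y.2 x'.2 y'.2 he
    exact Prod.ext (Fin.ext this.1) (Fin.ext this.2)
  · intro g
    obtain ⟨j, hj, i, hi, rfl⟩ := h.exists_lt hp g
    exact ⟨(⟨j, hj⟩, ⟨i, hi⟩), rfl⟩

theorem finite (h : IsM3 p f d c n a b) (hp : p.Prime) : Finite G :=
  Nat.finite_of_card_ne_zero (by rw [h.card_eq hp]; exact (Nat.pow_pos hp.pos).ne')

theorem normalForm_pow_prime_pow (h : IsM3 p f d c n a b) (hodd : Odd p) (hf : 0 < f)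
    {s j : ℕ} (hj : p ^ s ∣ j) {t : ℕ} (ht : d + c ≤ t + f + s) (i : ℕ) :
    (b ^ j * a ^ i) ^ p ^ t = b ^ (j * p ^ t) * a ^ (i * p ^ t) := by
  rw [normalForm_pow h.mul_comm']
  congr 1
  exact h.pow_eq_pow_iff.2 ((geom_sum_one_add_pow_modEq hodd hf hj ht).mul_left i)

theorem pow_prime_pow_eq_one_iff (h : IsM3 p f d c n a b) (hp : p.Prime) (hodd : Odd p)
    (hf : 0 < f) (hcf : c ≤ f) (hdn : d < n) {j i : ℕ} :
    (b ^ j * a ^ i) ^ p ^ d = 1 ↔ ∃ j', j = p ^ (n - d) * j' ∧ p ^ c ∣ j' + i := by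
  have hpos := Nat.pow_pos (n := d) hp.pos
  rw [h.normalForm_pow_prime_pow hodd hf (s := 0) (by simp) (by omega)]
  have hn : p ^ n = p ^ (n - d) * p ^ d := by rw [← pow_add]; congr 1; omega
  have key : ∀ j', b ^ (p ^ (n - d) * j' * p ^ d) * a ^ (i * p ^ d) = 1 ↔ p ^ c ∣ j' + i := by
    intro j'
    rw [mul_right_comm, ← hn, h.pow_mul_right, ← pow_add, h.pow_eq_one_iff, mul_comm i, ← mul_add,
      pow_add]
    exact Nat.mul_dvd_mul_iff_left hpos
  constructor
  · intro he
    obtain ⟨j', hj'⟩ : p ^ (n - d) ∣ j := by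
      have := h.dvd_of_eq_pow (i' := 0) (by simpa using he)
      rw [hn] at this
      exact Nat.dvd_of_mul_dvd_mul_right hpos this
    subst hj'
    exact ⟨j', rfl, (key j').1 he⟩
  · rintro ⟨j', rfl, hj'⟩
    exact (key j').2 hj'

theorem normalForm_pow_pred (h : IsM3 p f d c n a b) (hodd : Odd p) (hf : 0 < f)
    (hc : 0 < c) (hdn : d < n) (l k : ℕ) :
    (b ^ l * a ^ k) ^ p ^ (n + c - 1) = a ^ (l * p ^ (d + c - 1)) := by
  rw [h.normalForm_pow_prime_pow hodd hf (s := 0) (by simp) (by omega)]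
  have h1 : l * p ^ (n + c - 1) = p ^ n * (l * p ^ (c - 1)) := by
    rw [show n + c - 1 = n + (c - 1) by omega, pow_add]; ring
  have h2 : a ^ (k * p ^ (n + c - 1)) = 1 :=
    h.pow_eq_one_iff.2 ((pow_dvd_pow p (by omega)).mul_left k)
  rw [h1, h2, mul_one, h.pow_mul_right, show d + c - 1 = d + (c - 1) by omega, pow_add]
  congr 1
  ring

theorem pow_mul_prime_pow_pred_eq_one_iff (h : IsM3 p f d c n a b) (hp : p.Prime) (hc : 0 < c)
    {l : ℕ} : a ^ (l * p ^ (d + c - 1)) = 1 ↔ p ∣ l := by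
  rw [h.pow_eq_one_iff, show d + c = 1 + (d + c - 1) by omega, pow_add, pow_one,
    Nat.add_sub_cancel_left]
  exact Nat.mul_dvd_mul_iff_right (Nat.pow_pos hp.pos)

theorem orderOf_eq_iff_not_dvd (h : IsM3 p f d c n a b) (hp : p.Prime) (hodd : Odd p)
    (hf : 0 < f) (hc : 0 < c) (hdn : d < n) {l k : ℕ} :
    orderOf (b ^ l * a ^ k) = p ^ (n + c) ↔ ¬ p ∣ l := by
  have : Fact p.Prime := ⟨hp⟩
  rw [← h.pow_mul_prime_pow_pred_eq_one_iff hp hc, ← h.normalForm_pow_pred hodd hf hc hdn l k]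
  constructor
  · intro ho he
    have := Nat.le_of_dvd (Nat.pow_pos hp.pos) (orderOf_dvd_of_pow_eq_one he)
    rw [ho, Nat.pow_le_pow_iff_right hp.one_lt] at this
    omega
  · intro he
    have h1 : (n + c - 1) + 1 = n + c := by omega
    rw [← h1]
    refine orderOf_eq_prime_pow he ?_
    rw [pow_succ, pow_mul, h.normalForm_pow_pred hodd hf hc hdn, ← pow_mul, mul_assoc, ← pow_succ,
      h.pow_eq_one_iff, show d + c - 1 + 1 = d + c by omega]
    exact dvd_mul_left _ _

theorem normalForm_pow_prime_pow_pred (h : IsM3 p f d c n a b) (hodd : Odd p) (hf : 0 < f)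
    (hcf : c ≤ f) (hfd : f < d) (hdn : d < n) (j i : ℕ) :
    (b ^ (p ^ (n - d) * j) * a ^ i) ^ p ^ (d - 1) = b ^ (p ^ (n - 1) * j) * a ^ (i * p ^ (d - 1)) := by
  rw [h.normalForm_pow_prime_pow hodd hf (dvd_mul_right _ _) (by omega),
    show n - 1 = n - d + (d - 1) by omega, pow_add]
  congr 2
  ring

end IsM3

end NormalForm

section Counting

theorem card_filter_range_modEq {M : ℕ} (hM : 0 < M) (K v : ℕ) :
    #{i ∈ range (M * K) | i ≡ v [MOD M]} = K := by
  rw [← Nat.count_eq_card_filter_range, Nat.count_modEq_card _ hM]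
  simp [Nat.mul_div_cancel_left K hM]

theorem card_filter_product_of_card_eq {α β : Type*} (s : Finset α) (t : Finset β) (P : α → Prop)
    (Q : α → β → Prop) [DecidablePred P] [∀ x, DecidablePred (Q x)] (K : ℕ)
    (hK : ∀ x ∈ s, P x → #{y ∈ t | Q x y} = K) :
    #{z ∈ s ×ˢ t | P z.1 ∧ Q z.1 z.2} = #{x ∈ s | P x} * K := by
  rw [card_filter, sum_product, card_filter, sum_mul]
  refine sum_congr rfl fun x hx => ?_
  by_cases hP : P x
  · simp only [hP, true_and, if_true, one_mul]
    rw [← card_filter, hK x hx hP]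
  · simp [hP]

theorem card_filter_range_not_dvd {p : ℕ} (hp : p.Prime) {m : ℕ} (hm : 0 < m) :
    #{j ∈ range (p ^ m) | ¬ p ∣ j} = p ^ (m - 1) * (p - 1) := by
  rw [← Nat.totient_prime_pow hp hm, Nat.totient]
  congr 1
  ext j
  simp only [mem_filter, mem_range]
  rw [Nat.coprime_pow_left_iff hm, hp.coprime_iff_not_dvd]

end Counting

namespace IsM3

variable {G : Type*} [Group G] {a b : G} {p f d c n : ℕ}

theorem isExactBicyclicPair_iff (h : IsM3 p f d c n a b) (hp : p.Prime) (hodd : Odd p)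
    (hf : 0 < f) (hc : 0 < c) (hcf : c ≤ f) (hfd : f < d) (hdn : d < n) {α β : G} :
    IsExactBicyclicPair (p ^ d) (p ^ (n + c)) α β ↔
      (∃ j i, (¬ p ∣ j ∧ p ^ c ∣ j + i) ∧ b ^ (p ^ (n - d) * j) * a ^ i = α) ∧
      ∃ l k, ¬ p ∣ l ∧ b ^ l * a ^ k = β := by
  have : Fact p.Prime := ⟨hp⟩
  have hn1 : p ^ n = p ^ (n - 1) * p := by rw [← pow_succ]; congr 1; omega
  have hn2 : p ^ d = p ^ (d - 1) * p := by rw [← pow_succ]; congr 1; omega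
  constructor
  · rintro ⟨hα, hβ, hd, -⟩
    obtain ⟨j, i, rfl⟩ := h.exists_eq α
    obtain ⟨l, k, rfl⟩ := h.exists_eq β
    obtain ⟨j, rfl, hji⟩ := (h.pow_prime_pow_eq_one_iff hp hodd hf hcf hdn).1
      (hα ▸ pow_orderOf_eq_one _)
    have hl := (h.orderOf_eq_iff_not_dvd hp hodd hf hc hdn).1 hβ
    refine ⟨⟨j, i, ⟨?_, hji⟩, rfl⟩, l, k, hl, rfl⟩
    rintro ⟨j, rfl⟩
    obtain ⟨w, hw⟩ := hji
    obtain ⟨l', hl'⟩ := Nat.exists_mul_mod_eq_one_of_coprime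
      ((Nat.coprime_comm.1 ((hp.coprime_iff_not_dvd).2 hl))) hp.one_lt
    set α := b ^ (p ^ (n - d) * (p * j)) * a ^ i with hαdef
    have h1 : α ^ p ^ (d - 1) = a ^ (p ^ (d + c - 1) * w) := by
      rw [h.normalForm_pow_prime_pow_pred hodd hf hcf hfd hdn, ← mul_assoc, ← hn1,
        h.pow_mul_right, ← pow_add, hn2, mul_assoc, mul_comm i, ← mul_add, hw,
        show d + c - 1 = d - 1 + c by omega, pow_add, mul_assoc]
    have h2 : ((b ^ l * a ^ k) ^ p ^ (n + c - 1)) ^ (l' * w) = α ^ p ^ (d - 1) := by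
      rw [h.normalForm_pow_pred hodd hf hc hdn, h1, ← pow_mul, h.pow_eq_pow_iff]
      have h3 : l * l' ≡ 1 [MOD p] := by
        rw [Nat.ModEq, hl'.2, Nat.mod_eq_of_lt hp.one_lt]
      have h4 := (h3.mul_left' (p ^ (d + c - 1))).mul_right w
      rw [← pow_succ, mul_one, show d + c - 1 + 1 = d + c by omega] at h4
      convert h4 using 1
      ring
    have h3 : α ^ p ^ (d - 1) ∈ Subgroup.zpowers α ⊓ Subgroup.zpowers (b ^ l * a ^ k) :=
      ⟨Subgroup.npow_mem_zpowers _ _, h2 ▸ pow_mem (Subgroup.npow_mem_zpowers _ _) _⟩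
    rw [hd, Subgroup.mem_bot] at h3
    have := Nat.le_of_dvd (Nat.pow_pos hp.pos) (orderOf_dvd_of_pow_eq_one h3)
    rw [hα, Nat.pow_le_pow_iff_right hp.one_lt] at this
    omega
  · rintro ⟨⟨j, i, ⟨hj, hji⟩, rfl⟩, l, k, hl, rfl⟩
    set α := b ^ (p ^ (n - d) * j) * a ^ i with hαdef
    set β := b ^ l * a ^ k with hβdef
    have hα1 : α ^ p ^ d = 1 := (h.pow_prime_pow_eq_one_iff hp hodd hf hcf hdn).2 ⟨j, rfl, hji⟩
    have hα2 := h.normalForm_pow_prime_pow_pred hodd hf hcf hfd hdn j i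
    have hα3 : ∀ s i', (α ^ p ^ (d - 1)) ^ s = a ^ i' → p ∣ s := by
      intro s i' he
      rw [hα2, normalForm_pow h.mul_comm'] at he
      have h1 := h.dvd_of_eq_pow he
      rw [hn1, mul_assoc] at h1
      have h2 := Nat.dvd_of_mul_dvd_mul_left (Nat.pow_pos hp.pos) h1
      exact (hp.dvd_mul.1 h2).resolve_left hj
    have hα : orderOf α = p ^ d := by
      have h1 : d - 1 + 1 = d := by omega
      rw [← h1]
      refine orderOf_eq_prime_pow ?_ (h1.symm ▸ hα1)
      intro h2
      exact hp.one_lt.ne' (Nat.dvd_one.1 (hα3 1 0 (by simpa using h2)))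
    have hβ : orderOf β = p ^ (n + c) := (h.orderOf_eq_iff_not_dvd hp hodd hf hc hdn).2 hl
    have hfin := h.finite hp
    have hbot : Subgroup.zpowers α ⊓ Subgroup.zpowers β = ⊥ := by
      rw [Subgroup.eq_bot_iff_forall]
      intro g hg
      by_contra hg1
      have hgα : ∀ x ∈ Subgroup.zpowers α ⊓ Subgroup.zpowers β, x ^ p = 1 → x = 1 := by
        rintro x ⟨hxα, hxβ⟩ hxp
        obtain ⟨s, rfl⟩ := (mem_powers_iff_mem_zpowers).2 hxα
        obtain ⟨t, hst⟩ := (mem_powers_iff_mem_zpowers).2 hxβ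
        dsimp only at hst hxp ⊢
        have h1 : p ^ (d - 1) ∣ s := by
          rw [← pow_mul, ← orderOf_dvd_iff_pow_eq_one, hα, hn2] at hxp
          exact Nat.dvd_of_mul_dvd_mul_right hp.pos hxp
        have h2 : p ^ (n + c - 1) ∣ t := by
          rw [← hst, ← pow_mul, ← orderOf_dvd_iff_pow_eq_one, hβ,
            show n + c = n + c - 1 + 1 by omega, pow_succ] at hxp
          exact Nat.dvd_of_mul_dvd_mul_right hp.pos hxp
        obtain ⟨s, rfl⟩ := h1
        obtain ⟨t, rfl⟩ := h2
        rw [pow_mul, h.normalForm_pow_pred hodd hf hc hdn, ← pow_mul, pow_mul α] at hst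
        obtain ⟨s, rfl⟩ := hα3 s _ hst.symm
        rw [← mul_assoc, ← hn2, pow_mul, hα1, one_pow]
      obtain ⟨u, -, hu⟩ := (Nat.dvd_prime_pow hp).1
        (orderOf_dvd_of_mem_zpowers hg.1 |>.trans hα.dvd)
      have hu0 : u ≠ 0 := by
        rintro rfl
        exact hg1 (orderOf_eq_one_iff.1 (by simpa using hu))
      have h1 := hgα (g ^ p ^ (u - 1)) (pow_mem hg _) (by
        rw [← pow_mul, ← pow_succ, Nat.sub_add_cancel (by omega), ← hu, pow_orderOf_eq_one])
      have := Nat.le_of_dvd (Nat.pow_pos hp.pos) (orderOf_dvd_of_pow_eq_one h1)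
      rw [hu, Nat.pow_le_pow_iff_right hp.one_lt] at this
      omega
    refine ⟨hα, hβ, hbot, fun g => ?_⟩
    have hcompl := Subgroup.isComplement'_of_card_mul_and_disjoint
      (H := Subgroup.zpowers α) (K := Subgroup.zpowers β)
      (by rw [Nat.card_zpowers, Nat.card_zpowers, hα, hβ, h.card_eq hp, ← pow_add]; congr 1; omega)
      (disjoint_iff.2 hbot)
    obtain ⟨⟨⟨x, i', hx⟩, y, j', hy⟩, rfl⟩ := hcompl.2 g
    exact ⟨i', j', by simp only at hx hy ⊢; rw [hx, hy]⟩

theorem exists_normalForm_lt (h : IsM3 p f d c n a b) (hp : p.Prime) {m : ℕ} (hmn : m ≤ n)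
    (j i : ℕ) : ∃ j' < p ^ (n - m), ∃ i' < p ^ (d + c), ∃ t,
      b ^ (p ^ m * j) * a ^ i = b ^ (p ^ m * j') * a ^ i' ∧ j = j' + p ^ (n - m) * t ∧
      i' ≡ p ^ d * t + i [MOD p ^ (d + c)] := by
  have hn : p ^ n = p ^ m * p ^ (n - m) := by rw [← pow_add]; congr 1; omega
  refine ⟨j % p ^ (n - m), Nat.mod_lt _ (Nat.pow_pos hp.pos),
    (p ^ d * (j / p ^ (n - m)) + i) % p ^ (d + c), Nat.mod_lt _ (Nat.pow_pos hp.pos),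
    j / p ^ (n - m), ?_, (Nat.mod_add_div _ _).symm, Nat.mod_modEq _ _⟩
  rw [← h.orderOf_left, pow_mod_orderOf, ← h.pow_mul_mul_pow, hn, mul_assoc, ← mul_add,
    Nat.mod_add_div]

theorem normalForm_injOn (h : IsM3 p f d c n a b) (hp : p.Prime) {m : ℕ} (hmn : m ≤ n) :
    Set.InjOn (fun z : ℕ × ℕ => b ^ (p ^ m * z.1) * a ^ z.2)
      (range (p ^ (n - m)) ×ˢ range (p ^ (d + c)) : Finset (ℕ × ℕ)) := by
  have hn : p ^ n = p ^ m * p ^ (n - m) := by rw [← pow_add]; congr 1; omega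
  rintro ⟨j, i⟩ hji ⟨j', i'⟩ hji' he
  simp only [coe_product, Set.mem_prod, mem_coe, mem_range] at hji hji'
  have hpos := Nat.pow_pos (n := m) hp.pos
  obtain ⟨h1, h2⟩ := h.normalForm_inj (by rw [hn]; exact Nat.mul_lt_mul_of_pos_left hji.1 hpos)
    (by rw [hn]; exact Nat.mul_lt_mul_of_pos_left hji'.1 hpos) hji.2 hji'.2 he
  exact Prod.ext (Nat.eq_of_mul_eq_mul_left hpos h1) h2

theorem card_isExactBicyclicPair (h : IsM3 p f d c n a b) (hp : p.Prime) (hodd : Odd p)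
    (hf : 0 < f) (hc : 0 < c) (hcf : c ≤ f) (hfd : f < d) (hdn : d < n) :
    Nat.card {x : G × G // IsExactBicyclicPair (p ^ d) (p ^ (n + c)) x.1 x.2} =
      p ^ (d - 1) * (p - 1) * p ^ d * (p ^ (n - 1) * (p - 1) * p ^ (d + c)) := by
  classical
  set s : Finset (ℕ × ℕ) := {z ∈ range (p ^ d) ×ˢ range (p ^ (d + c)) |
    ¬ p ∣ z.1 ∧ p ^ c ∣ z.1 + z.2} with hs
  set t : Finset (ℕ × ℕ) := {z ∈ range (p ^ n) ×ˢ range (p ^ (d + c)) |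
    ¬ p ∣ z.1 ∧ True} with ht
  have hset : {x : G × G | IsExactBicyclicPair (p ^ d) (p ^ (n + c)) x.1 x.2} =
      ((fun z : ℕ × ℕ => b ^ (p ^ (n - d) * z.1) * a ^ z.2) '' s) ×ˢ
      ((fun z : ℕ × ℕ => b ^ (p ^ 0 * z.1) * a ^ z.2) '' t) := by
    ext ⟨α, β⟩
    rw [Set.mem_ofPred_eq, h.isExactBicyclicPair_iff hp hodd hf hc hcf hfd hdn, Set.mem_prod]
    refine and_congr ⟨?_, ?_⟩ ⟨?_, ?_⟩
    · rintro ⟨j, i, ⟨hj, hji⟩, rfl⟩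
      obtain ⟨j', hj', i', hi', t, he, rfl, hi⟩ := h.exists_normalForm_lt hp (Nat.sub_le n d) j i
      rw [Nat.sub_sub_self hdn.le] at *
      refine ⟨(j', i'), ?_, he.symm⟩
      simp only [hs, coe_filter, mem_product, mem_range, Set.mem_ofPred_eq]
      refine ⟨⟨hj', hi'⟩, ?_, ?_⟩
      · rwa [Nat.dvd_add_left ((dvd_pow_self p (by omega)).mul_right t)] at hj
      · have := (hi.of_dvd (pow_dvd_pow p (Nat.le_add_left c d))).add_left j'
        rw [this.dvd_iff dvd_rfl]
        convert hji using 1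
        ring
    · rintro ⟨⟨j, i⟩, hji, rfl⟩
      simp only [hs, coe_filter, mem_product, mem_range, Set.mem_ofPred_eq] at hji
      exact ⟨j, i, hji.2, rfl⟩
    · rintro ⟨l, k, hl, rfl⟩
      obtain ⟨l', hl', k', hk', t, he, rfl, hk⟩ := h.exists_normalForm_lt hp (Nat.zero_le n) l k
      refine ⟨(l', k'), ?_, by simpa using he.symm⟩
      simp only [ht, coe_filter, mem_product, mem_range, Set.mem_ofPred_eq]
      refine ⟨⟨hl', hk'⟩, ?_, trivial⟩
      rwa [Nat.dvd_add_left ((dvd_pow_self p (by omega)).mul_right t)] at hl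
    · rintro ⟨⟨l, k⟩, hlk, rfl⟩
      simp only [ht, coe_filter, mem_product, mem_range, Set.mem_ofPred_eq] at hlk
      exact ⟨l, k, hlk.2.1, by simp⟩
  have hinj1 := (h.normalForm_injOn hp (Nat.sub_le n d)).mono (s₁ := s)
    (by rw [Nat.sub_sub_self hdn.le]; exact coe_subset.2 (filter_subset _ _))
  have hinj2 := (h.normalForm_injOn hp (Nat.zero_le n)).mono (s₁ := t)
    (coe_subset.2 (filter_subset _ _))
  have h1 : Nat.card {x : G × G // IsExactBicyclicPair (p ^ d) (p ^ (n + c)) x.1 x.2} =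
    Set.ncard {x : G × G | IsExactBicyclicPair (p ^ d) (p ^ (n + c)) x.1 x.2} := rfl
  rw [h1, hset, Set.ncard_prod, hinj1.ncard_image, hinj2.ncard_image, Set.ncard_coe_finset,
    Set.ncard_coe_finset]
  have hpc := Nat.pow_pos (n := c) hp.pos
  congr 1
  · rw [hs, card_filter_product_of_card_eq _ _ (fun j => ¬ p ∣ j) (fun j i => p ^ c ∣ j + i) (p ^ d),
      card_filter_range_not_dvd hp (by omega)]
    intro j _ _
    rw [pow_add, mul_comm (p ^ d)]
    refine (congrArg card ?_).trans (card_filter_range_modEq hpc (p ^ d) ((p ^ c - 1) * j))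
    ext i
    simp only [mem_filter, and_congr_right_iff]
    intro _
    have hz : j + (p ^ c - 1) * j ≡ 0 [MOD p ^ c] := by
      rw [Nat.modEq_zero_iff_dvd]
      refine ⟨j, ?_⟩
      nth_rw 1 [← one_mul j]
      rw [← add_mul, Nat.add_sub_cancel' (Nat.one_le_pow _ _ hp.pos)]
    rw [← Nat.modEq_zero_iff_dvd]
    exact ⟨fun h => Nat.ModEq.add_left_cancel' j (h.trans hz.symm),
      fun h => (h.add_left j).trans hz⟩
  · rw [ht, card_filter_product_of_card_eq _ _ (fun j => ¬ p ∣ j) (fun _ _ => True) (p ^ (d + c)),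
      card_filter_range_not_dvd hp (by omega)]
    simp

end IsM3

theorem one_add_pow_modEq_sq (z m : ℕ) : (1 + z) ^ m ≡ 1 + m * z [MOD z ^ 2] := by
  induction m with
  | zero => simp; rfl
  | succ m ih =>
    rw [pow_succ]
    refine (ih.mul_right (1 + z)).trans ?_
    have : (1 + m * z) * (1 + z) = 1 + (m + 1) * z + z ^ 2 * m := by ring
    rw [this]
    simp [Nat.ModEq]

/-- The conditions on exponents which say that `a ↦ b ^ (p ^ (n - f) * j) * a ^ i`,
`b ↦ b ^ l * a ^ k` defines an automorphism of `M₃(p, d, n + c, d + c, f)`. -/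
def IsAutParam (p f d c n l k j i : ℕ) : Prop :=
  l + k * p ^ (n - d) ≡ p ^ (d - f) * j + i [MOD p ^ c] ∧
    i * (1 + p ^ f) ^ l + k ≡
      p ^ d * j + (k * (1 + p ^ f) ^ (p ^ (n - f) * j) + i * (1 + p ^ f)) [MOD p ^ (d + c)]

theorem pow_dvd_one_add_pow_sub {p f d l : ℕ} (hp : p.Prime) (hf : 0 < f) (hfd : f < d)
    (hl : l ≡ 1 [MOD p ^ (d - f)]) : ∃ w, (1 + p ^ f) ^ l = 1 + p ^ f + p ^ d * w := by
  have hl0 : 1 ≤ l := by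
    rw [Nat.one_le_iff_ne_zero]
    rintro rfl
    exact hp.one_lt.ne' (Nat.dvd_one.1
      ((dvd_pow_self p (by omega)).trans (Nat.modEq_zero_iff_dvd.1 hl.symm)))
  obtain ⟨m, rfl⟩ := Nat.exists_eq_add_of_le hl0
  have hm : p ^ (d - f) ∣ m :=
    Nat.modEq_zero_iff_dvd.1 (Nat.ModEq.add_left_cancel' 1 (by simpa using hl))
  have h1 := one_add_pow_pow_modEq_one hf hm
  rw [show f + (d - f) = d by omega] at h1
  obtain ⟨w, hw⟩ := (Nat.modEq_iff_dvd' (Nat.one_le_pow _ _ (by omega))).1 h1.symm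
  refine ⟨(1 + p ^ f) * w, ?_⟩
  have : (1 + p ^ f) ^ m = 1 + p ^ d * w := by
    rw [← hw, Nat.add_sub_cancel' (Nat.one_le_pow _ _ (by omega))]
  rw [pow_add, this]
  ring

theorem isAutParam_iff_exists {p f d c n l k : ℕ} (hp : p.Prime) (hf : 0 < f)
    (hcf : c ≤ f) (hfd : f < d) (hdn : d < n) (hl : l ≡ 1 [MOD p ^ (d - f)]) :
    ∃ j₀ v w, ∀ j i, IsAutParam p f d c n l k j i ↔
      j ≡ j₀ [MOD p ^ c] ∧ i ≡ v + w * j [MOD p ^ c] := by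
  have hpc : NeZero (p ^ c) := ⟨(Nat.pow_pos hp.pos).ne'⟩
  obtain ⟨w, hw⟩ := pow_dvd_one_add_pow_sub hp hf hfd hl
  obtain ⟨v, hv⟩ : ∃ v, (1 + p ^ f) ^ p ^ (n - f) = 1 + p ^ n * v := by
    have h1 := one_add_pow_pow_modEq_one hf (dvd_refl (p ^ (n - f)))
    rw [show f + (n - f) = n by omega] at h1
    obtain ⟨v, hv⟩ := (Nat.modEq_iff_dvd' (Nat.one_le_pow _ _ (by omega))).1 h1.symm
    exact ⟨v, by rw [← hv, Nat.add_sub_cancel' (Nat.one_le_pow _ _ (by omega))]⟩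
  have hlin : ∀ j i, i * (1 + p ^ f) ^ l + k ≡
      p ^ d * j + (k * (1 + p ^ f) ^ (p ^ (n - f) * j) + i * (1 + p ^ f)) [MOD p ^ (d + c)] ↔
      i * w ≡ j * (1 + k * p ^ (n - d) * v) [MOD p ^ c] := by
    intro j i
    have h1 : (1 + p ^ f) ^ (p ^ (n - f) * j) ≡ 1 + j * (p ^ n * v) [MOD p ^ (d + c)] := by
      rw [pow_mul, hv]
      refine (one_add_pow_modEq_sq _ j).of_dvd ?_
      rw [mul_pow, ← pow_mul]
      exact (pow_dvd_pow p (by omega)).mul_right _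
    have h2 := (((h1.mul_left k).add_right (i * (1 + p ^ f))).add_left (p ^ d * j))
    have h3 : p ^ d * j + (k * (1 + j * (p ^ n * v)) + i * (1 + p ^ f)) =
        i * (1 + p ^ f) + k + p ^ d * (j * (1 + k * p ^ (n - d) * v)) := by
      rw [show p ^ n = p ^ d * p ^ (n - d) by rw [← pow_add]; congr 1; omega]
      ring
    have h4 : i * (1 + p ^ f) ^ l + k = i * (1 + p ^ f) + k + p ^ d * (i * w) := by
      rw [hw]; ring
    rw [h3] at h2
    rw [h4]
    have h5 : i * (1 + p ^ f) + k + p ^ d * (i * w) ≡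
        i * (1 + p ^ f) + k + p ^ d * (j * (1 + k * p ^ (n - d) * v)) [MOD p ^ (d + c)] ↔
        i * w ≡ j * (1 + k * p ^ (n - d) * v) [MOD p ^ c] := by
      rw [pow_add]
      exact ⟨fun h => Nat.ModEq.mul_left_cancel' (Nat.pow_pos hp.pos).ne'
        (Nat.ModEq.add_left_cancel' _ h), fun h => (h.mul_left' _).add_left _⟩
    rw [← h5]
    exact ⟨fun h => h.trans h2, fun h => h.trans h2.symm⟩
  obtain ⟨u', hu'⟩ : ∃ u' : ZMod (p ^ c),
      ((1 + (k * p ^ (n - d) * v + p ^ (d - f) * w) : ℕ) : ZMod (p ^ c)) * u' = 1 := by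
    refine IsUnit.exists_right_inv ((ZMod.isUnit_iff_coprime _ _).2 (Nat.Coprime.pow_right _ ?_))
    refine Nat.Coprime.symm (hp.coprime_iff_not_dvd.2 fun h => hp.one_lt.ne' (Nat.dvd_one.1 ?_))
    refine (Nat.dvd_add_left ?_).1 h
    exact dvd_add (((dvd_pow_self p (by omega)).mul_left k).mul_right v)
      ((dvd_pow_self p (by omega)).mul_right w)
  have hneg : ((p ^ c - 1 : ℕ) : ZMod (p ^ c)) = -1 := by
    rw [Nat.cast_sub (Nat.one_le_pow _ _ hp.pos), ZMod.natCast_self]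
    simp
  obtain ⟨j₀, hj₀⟩ := ZMod.natCast_zmod_surjective
    (u' * (((l + k * p ^ (n - d) : ℕ) : ZMod (p ^ c)) * (w : ZMod (p ^ c))))
  refine ⟨j₀, l + k * p ^ (n - d), (p ^ c - 1) * p ^ (d - f), fun j i => ?_⟩
  rw [IsAutParam, hlin]
  simp only [← ZMod.natCast_eq_natCast_iff]
  rw [hj₀]
  simp only [Nat.cast_add, Nat.cast_mul, hneg] at hu' ⊢
  push_cast at hu' ⊢
  constructor
  · rintro ⟨h1, h2⟩
    constructor
    · linear_combination (-(j : ZMod (p ^ c))) * hu' - u' * h2 - u' * w * h1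
    · linear_combination -h1
  · rintro ⟨h1, h2⟩
    constructor
    · linear_combination -h2
    · linear_combination w * h2 -
        (1 + (k * p ^ (n - d) * v + p ^ (d - f) * w)) * h1 -
        (l + k * p ^ (n - d)) * w * hu'

namespace IsM3

variable {G : Type*} [Group G] {a b : G} {p f d c n : ℕ}

theorem conj_rel_iff (h : IsM3 p f d c n a b) (hodd : Odd p) (hf : 0 < f)
    (hcf : c ≤ f) (hfd : f < d) (hdn : d < n) {j i l k : ℕ} :
    (b ^ (p ^ (n - f) * j) * a ^ i) * (b ^ l * a ^ k) =
      (b ^ l * a ^ k) * (b ^ (p ^ (n - f) * j) * a ^ i) ^ (1 + p ^ f) ↔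
    i * (1 + p ^ f) ^ l + k ≡
      p ^ d * j + (k * (1 + p ^ f) ^ (p ^ (n - f) * j) + i * (1 + p ^ f)) [MOD p ^ (d + c)] := by
  set J := p ^ (n - f) * j with hJ
  have hJf : J * p ^ f = p ^ n * j := by
    rw [hJ, mul_right_comm, ← pow_add, Nat.sub_add_cancel (by omega)]
  rw [normalForm_mul h.mul_comm', normalForm_pow h.mul_comm', normalForm_mul h.mul_comm',
    show l + J * (1 + p ^ f) = J + l + p ^ n * j by rw [← hJf]; ring, h.pow_mul_mul_pow,
    mul_right_inj, h.pow_eq_pow_iff]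
  have hq : (1 + p ^ f) ^ J ≡ 1 [MOD p ^ (d + c - f)] :=
    (one_add_pow_pow_modEq_one hf (dvd_mul_right _ _)).of_dvd (pow_dvd_pow p (by omega))
  have h1 : (1 + p ^ f) ^ (J * (1 + p ^ f)) ≡ (1 + p ^ f) ^ J [MOD p ^ (d + c)] := by
    rw [mul_add, mul_one, hJf, pow_add (1 + p ^ f)]
    have := (one_add_pow_pow_modEq_one (p := p) hf (dvd_mul_right (p ^ n) j)).of_dvd
      (pow_dvd_pow p (by omega : d + c ≤ f + n))
    simpa only [mul_one] using this.mul_left ((1 + p ^ f) ^ J)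
  have h2 : ∑ u ∈ range (1 + p ^ f), ((1 + p ^ f) ^ J) ^ u ≡ 1 + p ^ f [MOD p ^ (d + c)] := by
    have hsum : ∀ q m : ℕ, ∑ u ∈ range (1 + m), q ^ u = 1 + q * ∑ u ∈ range m, q ^ u := by
      intro q m
      rw [add_comm 1 m, geom_sum_succ, add_comm]
    rw [hsum]
    refine Nat.ModEq.add_left 1 ?_
    have h3 := geom_sum_one_add_pow_modEq hodd hf (dvd_mul_right (p ^ (n - f)) j) (t := f)
      (m := d + c) (by omega)
    refine (h3.mul_left _).trans ?_
    have h4 := hq.mul_right' (p ^ f)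
    rwa [← pow_add, Nat.sub_add_cancel (by omega), one_mul] at h4
  have h3 := ((h1.mul_left k).add (h2.mul_left i)).add_left (p ^ d * j)
  exact ⟨fun h => h.trans h3, fun h => h.trans h3.symm⟩

theorem pow_rel_iff (h : IsM3 p f d c n a b) (hp : p.Prime) (hodd : Odd p) (hf : 0 < f)
    (hcf : c ≤ f) (hfd : f < d) (hdn : d < n) {j i l k : ℕ} :
    (b ^ l * a ^ k) ^ p ^ n = (b ^ (p ^ (n - f) * j) * a ^ i) ^ p ^ d ↔
      l + k * p ^ (n - d) ≡ p ^ (d - f) * j + i [MOD p ^ c] := by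
  rw [h.normalForm_pow_prime_pow hodd hf (s := 0) (by simp) (by omega),
    h.normalForm_pow_prime_pow hodd hf (s := 0) (by simp) (by omega)]
  have h1 : p ^ (n - f) * j * p ^ d = p ^ n * (p ^ (d - f) * j) := by
    rw [mul_right_comm, ← mul_assoc, ← pow_add, ← pow_add]
    congr 2
    omega
  have h2 : p ^ d * l + k * p ^ n = p ^ d * (l + k * p ^ (n - d)) := by
    rw [show p ^ n = p ^ d * p ^ (n - d) by rw [← pow_add]; congr 1; omega]
    ring
  rw [h1, mul_comm l, h.pow_mul_right, h.pow_mul_right, ← pow_add, ← pow_add, h.pow_eq_pow_iff,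
    h2, mul_comm i, ← mul_add, pow_add]
  exact ⟨fun h => Nat.ModEq.mul_left_cancel' (Nat.pow_pos hp.pos).ne' h, fun h => h.mul_left' _⟩

theorem pow_image (h : IsM3 p f d c n a b) (hodd : Odd p) (hf : 0 < f) (hfd : f < d)
    (hdn : d < n) {t : ℕ} (ht : c + f ≤ t) (htd : d ≤ t + 1) (j i : ℕ) :
    (b ^ (p ^ (n - f) * j) * a ^ i) ^ p ^ t = a ^ (i * p ^ t) := by
  have h1 : p ^ (n - f) * j * p ^ t = p ^ n * (p ^ (t - f) * j) := by
    rw [mul_right_comm, ← mul_assoc, ← pow_add, ← pow_add]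
    congr 2
    omega
  rw [h.normalForm_pow_prime_pow hodd hf (dvd_mul_right _ _) (by omega), h1, h.pow_mul_right,
    h.pow_eq_one_iff.2, one_mul]
  rw [← mul_assoc, ← pow_add]
  exact (pow_dvd_pow p (by omega)).mul_right j

theorem exists_orderOf_eq_of_mem_ker (hp : p.Prime) {N : ℕ} (hG : Nat.card G = p ^ N)
    {φ : G →* G} {g : G} (hg : φ g = 1) (hg1 : g ≠ 1) : ∃ g', φ g' = 1 ∧ orderOf g' = p := by
  obtain ⟨m, -, hm⟩ := (Nat.dvd_prime_pow hp).1 (hG ▸ orderOf_dvd_natCard g)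
  have hm0 : m ≠ 0 := by
    rintro rfl
    exact hg1 (orderOf_eq_one_iff.1 (by simpa using hm))
  refine ⟨g ^ p ^ (m - 1), by rw [map_pow, hg, one_pow], ?_⟩
  rw [orderOf_pow' _ (Nat.pow_pos hp.pos).ne', hm,
    Nat.gcd_eq_right (pow_dvd_pow p (Nat.sub_le m 1)), Nat.pow_div (Nat.sub_le m 1) hp.pos,
    show m - (m - 1) = 1 by omega, pow_one]

theorem injective_of_not_dvd (h : IsM3 p f d c n a b) (hp : p.Prime) (hodd : Odd p) (hf : 0 < f)
    (hc : 0 < c) (hcf : c ≤ f) (hfd : f < d) (hdn : d < n) {φ : G →* G} {j i l k : ℕ}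
    (ha : φ a = b ^ (p ^ (n - f) * j) * a ^ i) (hb : φ b = b ^ l * a ^ k)
    (hi : ¬ p ∣ i) (hl : ¬ p ∣ l) : Function.Injective φ := by
  rw [injective_iff_map_eq_one]
  intro g₀ hg₀
  by_contra hne
  obtain ⟨g, hg, hord⟩ := exists_orderOf_eq_of_mem_ker hp (h.card_eq hp) hg₀ hne
  have hgp : g ^ p = 1 := hord ▸ pow_orderOf_eq_one g
  have hg1 : g ≠ 1 := fun h1 => hp.one_lt.ne (by rw [← hord, h1, orderOf_one])
  obtain ⟨s, t, rfl⟩ := h.exists_eq g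
  obtain ⟨s₀, rfl⟩ : p ^ (n - 1) ∣ s := by
    have h1 := hgp
    rw [normalForm_pow h.mul_comm'] at h1
    have h2 := h.dvd_of_eq_pow (i' := 0) (by simpa using h1)
    rw [show n = n - 1 + 1 by omega, pow_succ] at h2
    exact Nat.dvd_of_mul_dvd_mul_right hp.pos h2
  have ht : p ^ (d - 1) ∣ t := by
    have h1 := h.normalForm_pow_prime_pow hodd hf (dvd_mul_right (p ^ (n - 1)) s₀) (t := 1)
      (by omega) t
    rw [pow_one, hgp, show p ^ (n - 1) * s₀ * p = p ^ n * s₀ by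
      rw [mul_right_comm, ← pow_succ]; congr 2; omega, h.pow_mul_right, ← pow_add] at h1
    have h2 := (pow_dvd_pow p (Nat.le_add_right d c)).trans (h.pow_eq_one_iff.1 h1.symm)
    rw [Nat.dvd_add_right (dvd_mul_right _ _), show d = d - 1 + 1 by omega, pow_succ] at h2
    exact Nat.dvd_of_mul_dvd_mul_right hp.pos h2
  obtain ⟨s₁, hs₁⟩ : p ^ n ∣ p ^ (n - 1) * s₀ := by
    rw [map_mul, map_pow, map_pow, ha, hb, normalForm_pow h.mul_comm', normalForm_pow h.mul_comm',
      normalForm_mul h.mul_comm'] at hg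
    have h1 := h.dvd_of_eq_pow (i' := 0) (by simpa using hg)
    have h2 : p ^ n ∣ p ^ (n - f) * j * t := by
      rw [mul_right_comm]
      refine Dvd.dvd.mul_right ?_ j
      rw [show n = n - f + f by omega, pow_add, show n - f + f - f = n - f by omega]
      exact mul_dvd_mul_left _ ((pow_dvd_pow p (by omega)).trans ht)
    rw [Nat.dvd_add_left h2] at h1
    exact Nat.Coprime.dvd_of_dvd_mul_left
      (Nat.Coprime.pow_left n (hp.coprime_iff_not_dvd.2 hl)) h1
  have hgT : b ^ (p ^ (n - 1) * s₀) * a ^ t = a ^ (p ^ d * s₁ + t) := by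
    rw [hs₁, h.pow_mul_right, pow_add]
  rw [hgT] at hg hgp hg1
  obtain ⟨T, hT⟩ : p ^ (d + c - 1) ∣ p ^ d * s₁ + t := by
    rw [← pow_mul, h.pow_eq_one_iff, show d + c = d + c - 1 + 1 by omega, pow_succ] at hgp
    exact Nat.dvd_of_mul_dvd_mul_right hp.pos hgp
  rw [hT] at hg hg1
  rw [map_pow, ha, pow_mul, h.pow_image hodd hf hfd hdn (by omega) (by omega), ← pow_mul,
    mul_right_comm, h.pow_mul_prime_pow_pred_eq_one_iff hp hc, hp.dvd_mul] at hg
  rw [mul_comm, Ne, h.pow_mul_prime_pow_pred_eq_one_iff hp hc] at hg1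
  exact hg.elim hi hg1

theorem isAutParam_of_mulEquiv (h : IsM3 p f d c n a b) (hp : p.Prime) (hodd : Odd p) (hf : 0 < f)
    (hc : 0 < c) (hcf : c ≤ f) (hfd : f < d) (hdn : d < n) {φ : G ≃* G} {J i l k : ℕ}
    (ha : φ a = b ^ J * a ^ i) (hb : φ b = b ^ l * a ^ k) :
    ∃ j, J = p ^ (n - f) * j ∧ l ≡ 1 [MOD p ^ (d - f)] ∧ IsAutParam p f d c n l k j i := by
  have hconj := congrArg φ h.mul_comm'
  rw [map_mul, map_mul, map_pow, ha, hb] at hconj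
  have hpow := congrArg φ h.pow_right
  rw [map_pow, map_pow, ha, hb] at hpow
  obtain ⟨j, rfl⟩ : p ^ (n - f) ∣ J := by
    have h1 := hconj
    rw [normalForm_mul h.mul_comm', normalForm_pow h.mul_comm', normalForm_mul h.mul_comm'] at h1
    have h2 := h.modEq_of_eq h1
    have h3 : J + l + 0 ≡ J + l + J * p ^ f [MOD p ^ n] := by
      rwa [add_zero, show J + l + J * p ^ f = l + J * (1 + p ^ f) by ring]
    have h4 := Nat.modEq_zero_iff_dvd.1 (Nat.ModEq.add_left_cancel' _ h3).symm
    rw [show n = n - f + f by omega, pow_add] at h4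
    exact Nat.dvd_of_mul_dvd_mul_right (Nat.pow_pos hp.pos) h4
  have h3 := (h.conj_rel_iff hodd hf hcf hfd hdn).1 hconj
  refine ⟨j, rfl, ?_, (h.pow_rel_iff hp hodd hf hcf hfd hdn).1 hpow, h3⟩
  have hi : ¬ p ∣ i := by
    intro hi
    rw [← h.pow_mul_prime_pow_pred_eq_one_iff hp hc,
      ← h.pow_image hodd hf hfd hdn (by omega) (by omega) j i, ← ha, ← map_pow,
      EmbeddingLike.map_eq_one_iff] at hi
    rw [← one_mul (p ^ (d + c - 1)), h.pow_mul_prime_pow_pred_eq_one_iff hp hc] at hi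
    exact hp.one_lt.ne' (Nat.dvd_one.1 hi)
  have hr : Nat.Coprime (p ^ d) (1 + p ^ f) := by
    refine Nat.Coprime.pow_left d (hp.coprime_iff_not_dvd.2 fun hr => ?_)
    rw [Nat.dvd_add_left (dvd_pow_self p hf.ne')] at hr
    exact hp.one_lt.ne' (Nat.dvd_one.1 hr)
  have h4 : (1 + p ^ f) ^ l ≡ 1 + p ^ f [MOD p ^ d] := by
    have h5 := h3.of_dvd (pow_dvd_pow p (Nat.le_add_right d c))
    have h6 : (1 + p ^ f) ^ (p ^ (n - f) * j) ≡ 1 [MOD p ^ d] :=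
      (one_add_pow_pow_modEq_one hf (dvd_mul_right _ _)).of_dvd (pow_dvd_pow p (by omega))
    have h7 : p ^ d * j ≡ 0 [MOD p ^ d] := Nat.modEq_zero_iff_dvd.2 (dvd_mul_right _ _)
    have h8 := h5.trans (h7.add ((h6.mul_left k).add_right (i * (1 + p ^ f))))
    rw [zero_add, mul_one, add_comm k] at h8
    exact Nat.ModEq.cancel_left_of_coprime
      (Nat.Coprime.pow_left d (hp.coprime_iff_not_dvd.2 hi)) (Nat.ModEq.add_right_cancel' k h8)
  have hl0 : 1 ≤ l := by
    rw [Nat.one_le_iff_ne_zero]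
    rintro rfl
    have h5 := Nat.ModEq.add_left_cancel' 1 (show 1 + 0 ≡ 1 + p ^ f [MOD p ^ d] by simpa using h4)
    have h6 := Nat.modEq_zero_iff_dvd.1 h5.symm
    rw [Nat.pow_dvd_pow_iff_le_right hp.one_lt] at h6
    omega
  obtain ⟨m, rfl⟩ := Nat.exists_eq_add_of_le hl0
  rw [pow_add, pow_one] at h4
  have h5 : (1 + p ^ f) ^ m ≡ 1 [MOD p ^ (f + (d - f))] := by
    rw [show f + (d - f) = d by omega]
    exact Nat.ModEq.cancel_left_of_coprime hr (by simpa using h4)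
  simpa using (Nat.modEq_zero_iff_dvd.2 (prime_pow_dvd_of_pow_modEq_one hp hodd hf h5)).add_left 1

theorem exists_mulAut (h : IsM3 p f d c n a b) (hp : p.Prime) (hodd : Odd p) (hf : 0 < f)
    (hc : 0 < c) (hcf : c ≤ f) (hfd : f < d) (hdn : d < n) {j i l k : ℕ}
    (hl : l ≡ 1 [MOD p ^ (d - f)]) (hpar : IsAutParam p f d c n l k j i) :
    ∃ φ : MulAut G, φ a = b ^ (p ^ (n - f) * j) * a ^ i ∧ φ b = b ^ l * a ^ k := by
  have := h.finite hp
  obtain ⟨φ, ha, hb⟩ := h.exists_lift (b ^ (p ^ (n - f) * j) * a ^ i) (b ^ l * a ^ k)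
    (by
      rw [h.pow_image hodd hf hfd hdn (by omega) (by omega), h.pow_eq_one_iff]
      exact dvd_mul_left _ _)
    ((h.pow_rel_iff hp hodd hf hcf hfd hdn).2 hpar.1)
    ((h.conj_rel_iff hodd hf hcf hfd hdn).2 hpar.2)
  have hl1 : l ≡ 1 [MOD p] := hl.of_dvd (dvd_pow_self p (by omega))
  have hli : l ≡ i [MOD p] := by
    have h1 := hpar.1.of_dvd (dvd_pow_self p hc.ne')
    have h2 : k * p ^ (n - d) ≡ 0 [MOD p] :=
      Nat.modEq_zero_iff_dvd.2 ((dvd_pow_self p (by omega)).mul_left k)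
    have h3 : p ^ (d - f) * j ≡ 0 [MOD p] :=
      Nat.modEq_zero_iff_dvd.2 ((dvd_pow_self p (by omega)).mul_right j)
    simpa using ((h2.add_left l).symm.trans h1).trans (h3.add_right i)
  have hdvd : ∀ {x}, x ≡ 1 [MOD p] → ¬ p ∣ x := fun hx hpx =>
    hp.one_lt.ne' (Nat.dvd_one.1 ((hx.dvd_iff dvd_rfl).1 hpx))
  have hinj := h.injective_of_not_dvd hp hodd hf hc hcf hfd hdn ha hb
    (hdvd (hli.symm.trans hl1)) (hdvd hl1)
  exact ⟨MulEquiv.ofBijective φ (Finite.injective_iff_bijective.1 hinj), ha, hb⟩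

theorem card_mulAut (h : IsM3 p f d c n a b) (hp : p.Prime) (hodd : Odd p) (hf : 0 < f)
    (hc : 0 < c) (hcf : c ≤ f) (hfd : f < d) (hdn : d < n) :
    Nat.card (MulAut G) = p ^ (n - (d - f)) * p ^ (d + c) * (p ^ (f - c) * p ^ d) := by
  classical
  set S : Finset ((ℕ × ℕ) × (ℕ × ℕ)) :=
    {z ∈ (range (p ^ n) ×ˢ range (p ^ (d + c))) ×ˢ (range (p ^ f) ×ˢ range (p ^ (d + c))) |
      (z.1.1 ≡ 1 [MOD p ^ (d - f)] ∧ True) ∧ IsAutParam p f d c n z.1.1 z.1.2 z.2.1 z.2.2} with hS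
  let F : (ℕ × ℕ) × (ℕ × ℕ) → G × G := fun z =>
    (b ^ (p ^ 0 * z.1.1) * a ^ z.1.2, b ^ (p ^ (n - f) * z.2.1) * a ^ z.2.2)
  have hinj : Function.Injective (fun φ : MulAut G => (φ b, φ a)) := by
    intro φ ψ he
    obtain ⟨h1, h2⟩ := Prod.mk.inj he
    ext g
    obtain ⟨j, i, rfl⟩ := h.exists_eq g
    rw [map_mul, map_mul, map_pow, map_pow, map_pow, map_pow, h1, h2]
  have hrange : Set.range (fun φ : MulAut G => (φ b, φ a)) = F '' S := by
    ext ⟨y, x⟩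
    constructor
    · rintro ⟨φ, he⟩
      obtain ⟨rfl, rfl⟩ := Prod.mk.inj he
      obtain ⟨J, hJ, i, hi, ha⟩ := h.exists_lt hp (φ a)
      obtain ⟨l, hl, k, hk, hb⟩ := h.exists_lt hp (φ b)
      obtain ⟨j, rfl, hl1, hpar⟩ := h.isAutParam_of_mulEquiv hp hodd hf hc hcf hfd hdn ha hb
      have hj : j < p ^ f := by
        rw [show n = n - f + f by omega, pow_add, show n - f + f - f = n - f by omega] at hJ
        exact Nat.lt_of_mul_lt_mul_left hJ
      refine ⟨((l, k), (j, i)), ?_, by simp [F, ha, hb]⟩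
      simp [hS, hl, hk, hj, hi, hl1, hpar]
    · rintro ⟨⟨⟨l, k⟩, j, i⟩, hz, he⟩
      simp only [hS, coe_filter, Set.mem_ofPred_eq] at hz
      obtain ⟨φ, ha, hb⟩ := h.exists_mulAut hp hodd hf hc hcf hfd hdn hz.2.1.1 hz.2.2
      refine ⟨φ, ?_⟩
      rw [← he]
      simp [F, ha, hb]
  have hF : Set.InjOn F S := by
    rintro ⟨z, w⟩ hz ⟨z', w'⟩ hz' he
    obtain ⟨hz1, hz2⟩ := mem_product.1 (mem_filter.1 hz).1
    obtain ⟨hz1', hz2'⟩ := mem_product.1 (mem_filter.1 hz').1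
    obtain ⟨h1, h2⟩ := Prod.mk.inj he
    refine Prod.ext (h.normalForm_injOn hp (Nat.zero_le n) hz1 hz1' h1)
      (h.normalForm_injOn hp (Nat.sub_le n f) ?_ ?_ h2)
    · rw [Nat.sub_sub_self (by omega)]; exact hz2
    · rw [Nat.sub_sub_self (by omega)]; exact hz2'
  rw [← Nat.card_range_of_injective hinj, hrange, Nat.card_coe_set_eq, hF.ncard_image,
    Set.ncard_coe_finset, hS]
  refine (card_filter_product_of_card_eq _ _
      (fun x : ℕ × ℕ => x.1 ≡ 1 [MOD p ^ (d - f)] ∧ True)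
      (fun (x y : ℕ × ℕ) => IsAutParam p f d c n x.1 x.2 y.1 y.2) (p ^ (f - c) * p ^ d) ?_).trans ?_
  rotate_left
  · rw [card_filter_product_of_card_eq _ _ (fun j => j ≡ 1 [MOD p ^ (d - f)]) (fun _ _ => True)
      (p ^ (d + c)) (by simp)]
    rw [show p ^ n = p ^ (d - f) * p ^ (n - (d - f)) by rw [← pow_add]; congr 1; omega,
      card_filter_range_modEq (Nat.pow_pos hp.pos)]
  · rintro ⟨l, k⟩ - ⟨hl, -⟩
    obtain ⟨j₀, v, w, hjvw⟩ := isAutParam_iff_exists (c := c) (k := k) hp hf hcf hfd hdn hl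
    simp only [hjvw]
    rw [card_filter_product_of_card_eq _ _ (fun j => j ≡ j₀ [MOD p ^ c])
      (fun j i => i ≡ v + w * j [MOD p ^ c]) (p ^ d)]
    · rw [show p ^ f = p ^ c * p ^ (f - c) by rw [← pow_add]; congr 1; omega,
        card_filter_range_modEq (Nat.pow_pos hp.pos)]
    · intro j _ _
      rw [add_comm d c, pow_add, card_filter_range_modEq (Nat.pow_pos hp.pos)]

end IsM3

section Orbits

variable {G : Type*} [Group G] {m n : ℕ}

theorem IsExactBicyclicPair.map {α β : G} (h : IsExactBicyclicPair m n α β) (φ : MulAut G) :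
    IsExactBicyclicPair m n (φ α) (φ β) := by
  obtain ⟨hα, hβ, hbot, hgen⟩ := h
  refine ⟨by rw [MulEquiv.orderOf_eq, hα], by rw [MulEquiv.orderOf_eq, hβ], ?_, fun g => ?_⟩
  · have h1 : ∀ x : G, Subgroup.zpowers (φ x) = (Subgroup.zpowers x).map φ.toMonoidHom :=
      fun x => (MonoidHom.map_zpowers φ.toMonoidHom x).symm
    rw [h1, h1, ← Subgroup.map_inf _ _ _ φ.injective, hbot, Subgroup.map_bot]
  · obtain ⟨i, j, hij⟩ := hgen (φ.symm g)
    refine ⟨i, j, ?_⟩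
    rw [← map_zpow, ← map_zpow, ← map_mul, ← hij, MulEquiv.apply_symm_apply]

theorem IsExactBicyclicPair.mulAut_ext {α β : G} (h : IsExactBicyclicPair m n α β)
    {φ ψ : MulAut G} (h1 : φ α = ψ α) (h2 : φ β = ψ β) : φ = ψ := by
  ext g
  obtain ⟨i, j, rfl⟩ := h.2.2.2 g
  rw [map_mul, map_mul, map_zpow, map_zpow, map_zpow, map_zpow, h1, h2]

theorem card_isExactBicyclicPair_eq_mul (G : Type*) [Group G] (m n : ℕ) :
    Nat.card {x : G × G // IsExactBicyclicPair m n x.1 x.2} =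
      Nat.card (Quotient (bicyclicPairSetoid G m n)) * Nat.card (MulAut G) := by
  rw [← Nat.card_prod]
  symm
  refine Nat.card_eq_of_bijective
    (fun z : Quotient (bicyclicPairSetoid G m n) × MulAut G =>
      ⟨(z.2 z.1.out.1.1, z.2 z.1.out.1.2), z.1.out.2.map z.2⟩) ⟨?_, ?_⟩
  · rintro ⟨q, φ⟩ ⟨q', ψ⟩ he
    obtain ⟨h1, h2⟩ := Prod.mk.inj (Subtype.mk.inj he)
    simp only at h1 h2
    have hq : q = q' := by
      rw [← q.out_eq, ← q'.out_eq]
      refine Quotient.sound ⟨φ.trans ψ.symm, ?_, ?_⟩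
      · rw [MulEquiv.trans_apply, h1, MulEquiv.symm_apply_apply]
      · rw [MulEquiv.trans_apply, h2, MulEquiv.symm_apply_apply]
    subst hq
    exact Prod.ext rfl (q.out.2.mulAut_ext h1 h2)
  · intro x
    obtain ⟨φ, h1, h2⟩ := Quotient.mk_out (s := bicyclicPairSetoid G m n) x
    exact ⟨(Quotient.mk _ x, φ), Subtype.ext (Prod.ext h1 h2)⟩

end Orbits

end Metacyclic

/-- For `G = M₃(p,d,e,h,f)` with `h - d ≤ f < d < h < e`, the number of
orbits of `Aut(G)` acting componentwise on the exact `(p^d,p^e)`-bicyclic pairs of `G`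
equals `p^(d+h-2(f+1))(p-1)²`. -/
theorem stmt_19 (p d e h f : ℕ) (hp : p.Prime) (hodd : Odd p)
    (hf : 0 < f) (hhd : h - d ≤ f) (hfd : f < d) (hdh : d < h) (hhe : h < e) :
    Nat.card (Quotient (bicyclicPairSetoid (M3 p d e h f) (p ^ d) (p ^ e))) =
      p ^ (d + h - 2 * (f + 1)) * (p - 1) ^ 2 := by
  obtain ⟨c, rfl⟩ := Nat.exists_eq_add_of_lt hdh
  obtain ⟨n, rfl⟩ := Nat.exists_eq_add_of_le (show c + 1 ≤ e by omega)
  rw [add_assoc d c 1, add_comm (c + 1) n] at *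
  set c := c + 1 with hc1
  have hc : 0 < c := by omega
  have hcf : c ≤ f := by omega
  have hdn : d < n := by omega
  have hM := isM3_M3 hp hodd hf hc hcf hfd hdn
  have hcard := card_isExactBicyclicPair_eq_mul (M3 p d (n + c) (d + c) f) (p ^ d) (p ^ (n + c))
  rw [hM.card_isExactBicyclicPair hp hodd hf hc hcf hfd hdn,
    hM.card_mulAut hp hodd hf hc hcf hfd hdn] at hcard
  refine Nat.eq_of_mul_eq_mul_right
    (Nat.mul_pos (Nat.mul_pos (Nat.pow_pos (n := n - (d - f)) hp.pos)
      (Nat.pow_pos (n := d + c) hp.pos)) (Nat.mul_pos (Nat.pow_pos (n := f - c) hp.pos)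
      (Nat.pow_pos (n := d) hp.pos))) (hcard.symm.trans ?_)
  have h1 : p ^ (d - 1) * (p - 1) * p ^ d * (p ^ (n - 1) * (p - 1) * p ^ (d + c)) =
      p ^ (d - 1 + d + (n - 1) + (d + c)) * (p - 1) ^ 2 := by
    simp only [pow_add]
    ring
  have h2 : p ^ (d + (d + c) - 2 * (f + 1)) * (p - 1) ^ 2 *
      (p ^ (n - (d - f)) * p ^ (d + c) * (p ^ (f - c) * p ^ d)) =
      p ^ (d + (d + c) - 2 * (f + 1) + (n - (d - f)) + (d + c) + (f - c) + d) * (p - 1) ^ 2 := by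
    simp only [pow_add]
    ring
  rw [h1, h2]
  congr 2
  omega
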